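/- Let S be a Polish space, c : S × S → [0,∞) a cost function satisfying condition (★), (Ω, 𝒜, P) a probability space, and ω ↦ μ_ω, ω ↦ ν_ω two measurable maps from Ω to the space P(S) of Borel probability measures on S (with the topology of weak convergence) such that ∫_Ω ∫_S c(x, x₀) dμ_ω(x) dP(ω) < ∞ and ∫_Ω ∫_S c(x, x₀) dν_ω(x) dP(ω) < ∞ for some x₀ ∈ S. Let G(ω) := KR_c(μ_ω, ν_ω). Then G(ω) = ℓ_c(μ_ω, ν_ω) for every ω, and there exists a map ω ↦ λ_ω from Ω to P(S × S), measurable with respect to the universal completion 𝒜* of 𝒜, such that for every ω ∈ Ω the measure λ_ω has margins μ_ω and ν_ω and G(ω) = ∫_{S×S} c(x,y) dλ_ω(x,y). -/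

import Mathlib

open MeasureTheory ProbabilityTheory ENNReal Set

noncomputable section

/-- The `μ`-completion of the σ-algebra `m`. -/
def muCompletion {α : Type*} (m : MeasurableSpace α) (μ : @Measure α m) : MeasurableSpace α :=
  letI := m
  inferInstanceAs (MeasurableSpace (MeasureTheory.NullMeasurableSpace α μ))

/-- The universal completion of a σ-algebra: the intersection of the `μ`-completions
over all finite nonnegative measures `μ`. -/
def univCompletion {α : Type*} (m : MeasurableSpace α) : MeasurableSpace α :=
  ⨅ (μ : @Measure α m) (_ : @IsFiniteMeasure α m μ), muCompletion m μ

/-- `Lip_c`: bounded continuous functions `u : S → ℝ` with `|u x - u y| ≤ c x y`. -/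
def LipC {S : Type*} [TopologicalSpace S] (c : S → S → ℝ) : Set (S → ℝ) :=
  {u | Continuous u ∧ (∃ M, ∀ x, |u x| ≤ M) ∧ ∀ x y, |u x - u y| ≤ c x y}

/-- Condition (★): `c x y = sup_{u ∈ Lip_c} |u x - u y|` for all `x, y`. -/
def StarCond {S : Type*} [TopologicalSpace S] (c : S → S → ℝ) : Prop :=
  ∀ x y, c x y = sSup {r : ℝ | ∃ u ∈ LipC c, r = |u x - u y|}

/-- `D(μ,ν)`: couplings of `μ` and `ν`, i.e. probability measures on `S × S`
with first margin `μ` and second margin `ν`. -/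
def Couplings {S : Type*} [MeasurableSpace S] (μ ν : Measure S) : Set (Measure (S × S)) :=
  {π | IsProbabilityMeasure π ∧ π.map Prod.fst = μ ∧ π.map Prod.snd = ν}

/-- The Kantorovich–Rubinštein functional `KR_c(μ,ν)`. -/
def KR {S : Type*} [MeasurableSpace S] (c : S → S → ℝ) (μ ν : Measure S) : ℝ≥0∞ :=
  ⨅ π ∈ Couplings μ ν, ∫⁻ p, ENNReal.ofReal (c p.1 p.2) ∂π

/-- The dual functional `ℓ_c(μ,ν) = sup_{f ∈ Lip_c} |∫ f dμ - ∫ f dν|`. -/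
def lipDist {S : Type*} [TopologicalSpace S] [MeasurableSpace S] (c : S → S → ℝ)
    (μ ν : Measure S) : ℝ≥0∞ :=
  ⨆ u ∈ LipC c, ENNReal.ofReal |∫ x, u x ∂μ - ∫ x, u x ∂ν|

/-!
Under condition (★) the cost is the supremum of the increasing sequence of pseudometrics
`max_{k < n} |u k x - u k y|`, where `u` is a countable family of functions in `Lip_c`, and each of
these is pulled back from a compact metric space.

On a compact metric space the duality `KR = ℓ` comes from the Riesz extension theorem applied to
`φ(x) + ψ(y) ↦ ∫ φ dμ + ∫ ψ dν`, the extended functional being a coupling by the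
Riesz–Markov–Kakutani theorem; an infimal convolution replaces a pair `φ(x) + ψ(y) ≤ d(x, y)` by a
single 1-Lipschitz function. Disintegration lifts a coupling of image measures to a coupling of the
original ones, and compactness of the set of couplings allows the passage to the limit in `n`.

For the selection, Prokhorov's theorem makes the map sending a measure on a product to its pair of
margins proper. Hence the optimal couplings of `μ_ω` and `ν_ω` form a compact set depending
measurably on `ω`, and this set shrinks to a point when one successively minimises the members of a
countable point-separating family of lower semicontinuous functions on it. The selection obtained
this way is measurable for `𝒜` itself.
-/

open Filter Topology TopologicalSpace

section Minimizers

variable {X R : Type*}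

/-- The set of minimisers of `g` on `K`. -/
def minimizersOn [Preorder R] (g : X → R) (K : Set X) : Set X :=
  {x ∈ K | IsMinOn g K x}

lemma minimizersOn_subset [Preorder R] (g : X → R) (K : Set X) : minimizersOn g K ⊆ K :=
  sep_subset K _

/-- The result of minimising `g 0, …, g (n - 1)` over `K` successively, each on the set of
minimisers of its predecessors. -/
def lexMinimizersOn [Preorder R] (g : ℕ → X → R) (K : Set X) : ℕ → Set X
  | 0 => K
  | n + 1 => minimizersOn (g n) (lexMinimizersOn g K n)

lemma eq_of_mem_iInter_lexMinimizersOn [PartialOrder R] {g : ℕ → X → R} {K : Set X} {x y : X}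
    (hx : x ∈ ⋂ n, lexMinimizersOn g K n) (hy : y ∈ ⋂ n, lexMinimizersOn g K n) (n : ℕ) :
    g n x = g n y := by
  rw [mem_iInter] at hx hy
  exact le_antisymm ((hx (n + 1)).2 (hy n)) ((hy (n + 1)).2 (hx n))

variable [TopologicalSpace X] [LinearOrder R] {g : X → R} {K : Set X}

lemma isCompact_minimizersOn (hg : LowerSemicontinuous g) (hK : IsCompact K) :
    IsCompact (minimizersOn g K) := by
  have : minimizersOn g K = K ∩ ⋂ y ∈ K, g ⁻¹' Iic (g y) := by
    ext x
    simp [minimizersOn, isMinOn_iff]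
  rw [this]
  exact hK.inter_right (isClosed_biInter fun y _ => hg.isClosed_preimage (g y))

lemma minimizersOn_nonempty (hg : LowerSemicontinuous g) (hK : IsCompact K) (hne : K.Nonempty) :
    (minimizersOn g K).Nonempty :=
  (hg.lowerSemicontinuousOn K).exists_isMinOn hne hK

lemma minimizersOn_inter_nonempty_iff [TopologicalSpace R] [OrderTopology R] [DenselyOrdered R]
    (hg : LowerSemicontinuous g) (hK : IsCompact K) {C : Set X} (hC : IsClosed C)
    {D : Set R} (hD : Dense D) :
    (minimizersOn g K ∩ C).Nonempty ↔ (K ∩ C).Nonempty ∧ ∀ r ∈ D,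
      (K ∩ g ⁻¹' Iic r).Nonempty → (K ∩ (C ∩ g ⁻¹' Iic r)).Nonempty := by
  refine ⟨fun ⟨x, ⟨hx, hmin⟩, hxC⟩ => ⟨⟨x, hx, hxC⟩, fun r _ ⟨y, hy, hyr⟩ =>
    ⟨x, hx, hxC, (hmin hy).trans hyr⟩⟩, fun ⟨hne, hlevel⟩ => ?_⟩
  obtain ⟨x, ⟨hx, hxC⟩, hmin⟩ :=
    (hg.lowerSemicontinuousOn (K ∩ C)).exists_isMinOn hne (hK.inter_right hC)
  refine ⟨x, ⟨hx, isMinOn_iff.2 fun y hy => ?_⟩, hxC⟩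
  by_contra! hlt
  obtain ⟨r, hrD, hyr, hrx⟩ := hD.exists_between hlt
  obtain ⟨z, hz, hzC, hzr⟩ := hlevel r hrD ⟨y, hy, hyr.le⟩
  exact (isMinOn_iff.1 hmin z ⟨hz, hzC⟩).not_gt (lt_of_le_of_lt hzr hrx)

end Minimizers

section MeasurableSelection

variable {Ω X R Y : Type*} [MeasurableSpace Ω] [TopologicalSpace X]

/-- Measurability of a set-valued map, tested by hitting closed sets. -/
def MeasurableMultifunction (K : Ω → Set X) : Prop :=
  ∀ C, IsClosed C → MeasurableSet {ω | (K ω ∩ C).Nonempty}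

lemma MeasurableMultifunction.minimizersOn [LinearOrder R] [TopologicalSpace R] [OrderTopology R]
    [DenselyOrdered R] [SeparableSpace R] {g : X → R} (hg : LowerSemicontinuous g)
    {K : Ω → Set X} (hm : MeasurableMultifunction K) (hK : ∀ ω, IsCompact (K ω)) :
    MeasurableMultifunction fun ω => minimizersOn g (K ω) := by
  intro C hC
  obtain ⟨D, hDc, hD⟩ := exists_countable_dense R
  have hlevel (r : R) : IsClosed (g ⁻¹' Iic r) := hg.isClosed_preimage r
  simp only [minimizersOn_inter_nonempty_iff hg (hK _) hC hD, ofPred_and, ofPred_forall]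
  exact (hm C hC).inter (.biInter hDc fun r _ =>
    (hm _ (hlevel r)).imp (hm _ (hC.inter (hlevel r))))

theorem exists_measurable_mem_iInter [T2Space X] [MeasurableSpace X] [BorelSpace X]
    {K : ℕ → Ω → Set X} (hanti : ∀ n ω, K (n + 1) ω ⊆ K n ω) (hK : ∀ n ω, IsCompact (K n ω))
    (hne : ∀ n ω, (K n ω).Nonempty) (hm : ∀ n, MeasurableMultifunction (K n))
    (hsub : ∀ ω, (⋂ n, K n ω).Subsingleton) :
    ∃ s : Ω → X, Measurable s ∧ ∀ ω, s ω ∈ ⋂ n, K n ω := by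
  have inter_nonempty {C : Set X} (hC : IsClosed C) (ω : Ω) (h : ∀ n, (K n ω ∩ C).Nonempty) :
      (⋂ n, K n ω ∩ C).Nonempty :=
    IsCompact.nonempty_iInter_of_sequence_nonempty_isCompact_isClosed _
      (fun n => inter_subset_inter_left C (hanti n ω)) h ((hK 0 ω).inter_right hC)
      fun n => (hK n ω).isClosed.inter hC
  have hne' (ω : Ω) : (⋂ n, K n ω).Nonempty := by
    simpa using inter_nonempty isClosed_univ ω (by simpa using (hne · ω))
  choose s hs using hne'
  refine ⟨s, measurable_of_isClosed fun C hC => ?_, hs⟩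
  have : s ⁻¹' C = ⋂ n, {ω | (K n ω ∩ C).Nonempty} := by
    ext ω
    rw [mem_iInter]
    refine ⟨fun h n => ⟨s ω, mem_iInter.1 (hs ω) n, h⟩, fun h => ?_⟩
    obtain ⟨x, hx⟩ := inter_nonempty hC ω h
    rw [← iInter_inter] at hx
    have hsx : s ω = x := hsub ω (hs ω) hx.1
    exact mem_preimage.2 (hsx ▸ hx.2)
  rw [this]
  exact .iInter fun n => hm n C hC

lemma exists_lowerSemicontinuous_separating (X : Type*) [TopologicalSpace X] [T0Space X]
    [SecondCountableTopology X] :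
    ∃ g : ℕ → X → ℝ≥0∞, (∀ n, LowerSemicontinuous (g n)) ∧
      ∀ x y, (∀ n, g n x = g n y) → x = y := by
  obtain ⟨b, hbc, hbne, hb⟩ : ∃ b : Set (Set X), b.Countable ∧ b.Nonempty ∧ IsTopologicalBasis b :=
    ⟨insert ∅ (countableBasis X), (countable_countableBasis X).insert _, insert_nonempty _ _,
      (isBasis_countableBasis X).insert_empty⟩
  obtain ⟨U, rfl⟩ := hbc.exists_eq_range hbne
  refine ⟨fun n => (U n).indicator 1, fun n =>
    (hb.isOpen (mem_range_self n)).lowerSemicontinuous_indicator zero_le_one, fun x y h => ?_⟩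
  refine (hb.inseparable_iff.2 ?_).eq
  rintro _ ⟨n, rfl⟩
  have := h n
  by_cases hx : x ∈ U n <;> by_cases hy : y ∈ U n <;> simp_all

theorem MeasurableMultifunction.exists_measurable_selection [T2Space X]
    [SecondCountableTopology X] [MeasurableSpace X] [BorelSpace X] {K : Ω → Set X}
    (hm : MeasurableMultifunction K) (hK : ∀ ω, IsCompact (K ω)) (hne : ∀ ω, (K ω).Nonempty) :
    ∃ s : Ω → X, Measurable s ∧ ∀ ω, s ω ∈ K ω := by
  obtain ⟨g, hg, hsep⟩ := exists_lowerSemicontinuous_separating X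
  have hlex (n : ℕ) : (∀ ω, IsCompact (lexMinimizersOn g (K ω) n)) ∧
      (∀ ω, (lexMinimizersOn g (K ω) n).Nonempty) ∧
      MeasurableMultifunction fun ω => lexMinimizersOn g (K ω) n := by
    induction n with
    | zero => exact ⟨hK, hne, hm⟩
    | succ n ih =>
      obtain ⟨hKn, hnen, hmn⟩ := ih
      exact ⟨fun ω => isCompact_minimizersOn (hg n) (hKn ω),
        fun ω => minimizersOn_nonempty (hg n) (hKn ω) (hnen ω), hmn.minimizersOn (hg n) hKn⟩
  obtain ⟨s, hs, hsK⟩ := exists_measurable_mem_iInter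
    (K := fun n ω => lexMinimizersOn g (K ω) n)
    (fun n ω => minimizersOn_subset _ _) (fun n => (hlex n).1)
    (fun n => (hlex n).2.1) (fun n => (hlex n).2.2)
    fun ω x hx y hy => hsep x y (eq_of_mem_iInter_lexMinimizersOn hx hy)
  exact ⟨s, hs, fun ω => mem_iInter.1 (hsK ω) 0⟩

theorem exists_measurable_minimizer_fiber [T2Space X] [SecondCountableTopology X]
    [MeasurableSpace X] [BorelSpace X] [TopologicalSpace Y] [MeasurableSpace Y]
    [OpensMeasurableSpace Y] {f : X → Y} (hf : IsProperMap f) {g : X → ℝ≥0∞}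
    (hg : LowerSemicontinuous g) {h : Ω → Y} (hh : Measurable h) (hrange : ∀ ω, h ω ∈ range f) :
    ∃ s : Ω → X, Measurable s ∧ ∀ ω, s ω ∈ minimizersOn g (f ⁻¹' {h ω}) := by
  have hK (ω : Ω) : IsCompact (f ⁻¹' {h ω}) := hf.isCompact_preimage isCompact_singleton
  have hm : MeasurableMultifunction fun ω => f ⁻¹' {h ω} := by
    intro C hC
    have : {ω | (f ⁻¹' {h ω} ∩ C).Nonempty} = h ⁻¹' (f '' C) := by
      ext ω; exact ⟨fun ⟨x, hx, hxC⟩ => ⟨x, hxC, hx⟩, fun ⟨x, hxC, hx⟩ => ⟨x, hx, hxC⟩⟩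
    rw [this]
    exact hh (hf.isClosedMap C hC).measurableSet
  exact (hm.minimizersOn hg hK).exists_measurable_selection
    (fun ω => isCompact_minimizersOn hg (hK ω)) fun ω => minimizersOn_nonempty hg (hK ω) (hrange ω)

end MeasurableSelection

section WeakTopology

variable {X Y : Type*} [TopologicalSpace X] [MeasurableSpace X] [TopologicalSpace Y]

lemma lowerSemicontinuous_measure_of_isOpen [OpensMeasurableSpace X] [HasOuterApproxClosed X]
    {G : Set X} (hG : IsOpen G) :
    LowerSemicontinuous fun μ : ProbabilityMeasure X => (μ : Measure X) G :=
  lowerSemicontinuous_iff_le_liminf.2 fun _ =>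
    ProbabilityMeasure.le_liminf_measure_open_of_tendsto tendsto_id hG

lemma continuous_of_lowerSemicontinuous_measure [OpensMeasurableSpace X]
    [FirstCountableTopology Y] {f : Y → ProbabilityMeasure X}
    (hf : ∀ G, IsOpen G → LowerSemicontinuous fun y => (f y : Measure X) G) : Continuous f :=
  continuous_iff_continuousAt.2 fun y =>
    tendsto_of_forall_isOpen_le_liminf' fun G hG =>
      lowerSemicontinuousAt_iff_le_liminf.1 (hf G hG y)

lemma exists_countable_isOpen_lt_measure (X : Type*) [TopologicalSpace X]
    [SecondCountableTopology X] [MeasurableSpace X] :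
    ∃ B : Set (Set X), B.Countable ∧ (∀ U ∈ B, IsOpen U) ∧
      ∀ (μ : Measure X) (G : Set X), IsOpen G → ∀ r < μ G, ∃ U ∈ B, U ⊆ G ∧ r < μ U := by
  have hb : (countableBasis X).Countable := countable_countableBasis X
  refine ⟨sUnion '' {F | F.Finite ∧ F ⊆ countableBasis X},
    (countable_ofPred_finite_subset hb).image _, ?_, fun μ G hG r hr => ?_⟩
  · rintro _ ⟨F, ⟨-, hF⟩, rfl⟩
    exact isOpen_sUnion fun U hU => isOpen_of_mem_countableBasis (hF hU)
  · let A : Set (Set X) := {U ∈ countableBasis X | U ⊆ G}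
    have hAG : G = ⋃ F ∈ {F | F.Finite ∧ F ⊆ A}, ⋃₀ F := by
      refine Subset.antisymm (fun x hx => ?_)
        (iUnion₂_subset fun F hF => sUnion_subset fun U hU => (hF.2 hU).2)
      obtain ⟨U, hU, hxU, hUG⟩ := (isBasis_countableBasis X).exists_subset_of_mem_open hx hG
      exact mem_iUnion₂.2 ⟨{U}, ⟨finite_singleton U, singleton_subset_iff.2 ⟨hU, hUG⟩⟩,
        by simpa using hxU⟩
    rw [hAG, measure_biUnion_eq_iSup (countable_ofPred_finite_subset (hb.mono (sep_subset _ _)))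
      fun F hF F' hF' => ⟨F ∪ F', ⟨hF.1.union hF'.1, union_subset hF.2 hF'.2⟩,
        sUnion_subset_sUnion subset_union_left, sUnion_subset_sUnion subset_union_right⟩] at hr
    obtain ⟨F, ⟨hFfin, hFA⟩, hrF⟩ := by simpa only [lt_iSup_iff, exists_prop] using hr
    exact ⟨⋃₀ F, mem_image_of_mem _ ⟨hFfin, hFA.trans (sep_subset _ _)⟩,
      sUnion_subset fun U hU => (hFA hU).2, hrF⟩

lemma exists_countable_subbasis_probabilityMeasure (X : Type*) [TopologicalSpace X]
    [SecondCountableTopology X] [MeasurableSpace X] [OpensMeasurableSpace X]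
    [HasOuterApproxClosed X] :
    ∃ 𝒮 : Set (Set (ProbabilityMeasure X)), 𝒮.Countable ∧
      (inferInstance : TopologicalSpace (ProbabilityMeasure X)) = generateFrom 𝒮 ∧
      ∀ V ∈ 𝒮, ∃ U r, IsOpen U ∧ V = {μ : ProbabilityMeasure X | r < (μ : Measure X) U} := by
  obtain ⟨B, hBc, hBo, hB⟩ := exists_countable_isOpen_lt_measure X
  obtain ⟨D, hDc, hD⟩ := exists_countable_dense ℝ≥0∞
  let 𝒮 : Set (Set (ProbabilityMeasure X)) :=
    (fun p : Set X × ℝ≥0∞ => {μ | p.2 < (μ : Measure X) p.1}) '' (B ×ˢ D)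
  have h𝒮c : 𝒮.Countable := (hBc.prod hDc).image _
  have hfc : @FirstCountableTopology _ (generateFrom 𝒮) :=
    @SecondCountableTopology.to_firstCountableTopology _ (generateFrom 𝒮)
      (@SecondCountableTopology.mk _ (generateFrom 𝒮) ⟨𝒮, h𝒮c, rfl⟩)
  have hopen {U : Set X} {q : ℝ≥0∞} (hU : U ∈ B) (hq : q ∈ D) :
      IsOpen[generateFrom 𝒮] {ν : ProbabilityMeasure X | q < (ν : Measure X) U} :=
    isOpen_generateFrom_of_mem ⟨(U, q), ⟨hU, hq⟩, rfl⟩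
  refine ⟨𝒮, h𝒮c, le_antisymm (le_generateFrom ?_) (continuous_id_iff_le.1 ?_), ?_⟩
  · rintro _ ⟨⟨U, r⟩, ⟨hU, -⟩, rfl⟩
    exact (lowerSemicontinuous_measure_of_isOpen (hBo U hU)).isOpen_preimage r
  · refine @continuous_of_lowerSemicontinuous_measure _ _ _ _ (generateFrom 𝒮) _ hfc _
      fun G hG μ r hr => ?_
    obtain ⟨U, hUB, hUG, hrU⟩ := hB μ G hG r hr
    obtain ⟨q, hqD, hrq, hqU⟩ := hD.exists_between hrU
    filter_upwards [@IsOpen.mem_nhds _ (generateFrom 𝒮) μ _ (hopen hUB hqD) hqU] with ν hν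
    exact (hrq.trans hν).trans_le (measure_mono hUG)
  · rintro _ ⟨⟨U, r⟩, ⟨hU, -⟩, rfl⟩
    exact ⟨U, r, hBo U hU, rfl⟩

instance secondCountableTopology_probabilityMeasure [SecondCountableTopology X]
    [OpensMeasurableSpace X] [HasOuterApproxClosed X] :
    SecondCountableTopology (ProbabilityMeasure X) := by
  obtain ⟨𝒮, h𝒮c, h𝒮, -⟩ := exists_countable_subbasis_probabilityMeasure X
  exact ⟨⟨𝒮, h𝒮c, h𝒮⟩⟩

instance borelSpace_probabilityMeasure [SecondCountableTopology X] [BorelSpace X]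
    [HasOuterApproxClosed X] : BorelSpace (ProbabilityMeasure X) := by
  refine ⟨le_antisymm ?_ ?_⟩
  · suffices @Measurable _ _ (borel _) _ (id : ProbabilityMeasure X → ProbabilityMeasure X) from
      fun s hs => this hs
    let _ : MeasurableSpace (ProbabilityMeasure X) := borel _
    have _ : BorelSpace (ProbabilityMeasure X) := ⟨rfl⟩
    exact (Measurable.measure_of_isPiSystem_of_isProbabilityMeasure BorelSpace.measurable_eq
      isPiSystem_isOpen fun G hG =>
        (lowerSemicontinuous_measure_of_isOpen hG).measurable).subtype_mk
  · obtain ⟨𝒮, -, h𝒮, h𝒮open⟩ := exists_countable_subbasis_probabilityMeasure X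
    rw [borel_eq_generateFrom_of_subbasis h𝒮]
    refine MeasurableSpace.generateFrom_le fun V hV => ?_
    obtain ⟨U, r, hU, rfl⟩ := h𝒮open V hV
    have : Measurable fun μ : ProbabilityMeasure X => (μ : Measure X) U :=
      (Measure.measurable_coe hU.measurableSet).comp measurable_subtype_coe
    exact this measurableSet_Ioi

lemma lowerSemicontinuous_lintegral_ofReal [SecondCountableTopology X] [OpensMeasurableSpace X]
    [HasOuterApproxClosed X] {f : X → ℝ} (hf : Continuous f) (hf0 : 0 ≤ f) :
    LowerSemicontinuous fun μ : ProbabilityMeasure X => ∫⁻ x, ENNReal.ofReal (f x) ∂μ := by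
  refine lowerSemicontinuous_iff_isClosed_preimage.2 fun r => IsSeqClosed.isClosed ?_
  intro μs μ hμs hμ
  refine (lintegral_le_liminf_lintegral_of_forall_isOpen_measure_le_liminf_measure hf hf0
    fun G hG => ProbabilityMeasure.le_liminf_measure_open_of_tendsto hμ hG).trans ?_
  exact liminf_le_of_le (by isBoundedDefault) fun b hb =>
    let ⟨n, hn⟩ := hb.exists; hn.trans (hμs n)

end WeakTopology

section Margins

variable {X Y : Type*} [MeasurableSpace X] [MeasurableSpace Y]

/-- The pair of margins of a probability measure on a product; its fibre over `(μ, ν)` is the set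
of couplings of `μ` and `ν`. -/
def margins (π : ProbabilityMeasure (X × Y)) : ProbabilityMeasure X × ProbabilityMeasure Y :=
  (π.map measurable_fst.aemeasurable, π.map measurable_snd.aemeasurable)

lemma margins_eq_iff {π : ProbabilityMeasure (X × Y)} {μ : ProbabilityMeasure X}
    {ν : ProbabilityMeasure Y} :
    margins π = (μ, ν) ↔ (π : Measure (X × Y)).map Prod.fst = (μ : Measure X) ∧
      (π : Measure (X × Y)).map Prod.snd = (ν : Measure Y) := by
  simp only [margins, Prod.mk.injEq, ← ProbabilityMeasure.toMeasure_injective.eq_iff,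
    ProbabilityMeasure.toMeasure_map]

lemma margins_prod (μ : ProbabilityMeasure X) (ν : ProbabilityMeasure Y) :
    margins (μ.prod ν) = (μ, ν) :=
  margins_eq_iff.2 ⟨Measure.map_fst_prod.trans (by simp), Measure.map_snd_prod.trans (by simp)⟩

lemma margins_surjective : Function.Surjective (margins (X := X) (Y := Y)) :=
  fun ⟨μ, ν⟩ => ⟨μ.prod ν, margins_prod μ ν⟩

variable [TopologicalSpace X] [TopologicalSpace Y] [BorelSpace X] [BorelSpace Y]

lemma continuous_margins [SecondCountableTopologyEither X Y] :
    Continuous (margins (X := X) (Y := Y)) :=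
  (ProbabilityMeasure.continuous_map continuous_fst).prodMk
    (ProbabilityMeasure.continuous_map continuous_snd)

variable [PolishSpace X] [PolishSpace Y]

lemma isTightMeasureSet_image_of_isCompact {A : Set (ProbabilityMeasure X)} (hA : IsCompact A) :
    IsTightMeasureSet {((μ : ProbabilityMeasure X) : Measure X) | μ ∈ A} := by
  let _ := upgradeIsCompletelyMetrizable X
  exact isTightMeasureSet_of_isCompact_closure (by rwa [hA.isClosed.closure_eq])

lemma isProperMap_margins : IsProperMap (margins (X := X) (Y := Y)) := by
  refine isProperMap_iff_isCompact_preimage.2 ⟨continuous_margins, fun K hK => ?_⟩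
  rw [← (hK.isClosed.preimage continuous_margins).closure_eq]
  refine isCompact_closure_of_isTightMeasureSet (IsTightMeasureSet.prodMk ?_ ?_)
  · refine (isTightMeasureSet_image_of_isCompact (hK.image continuous_fst)).subset ?_
    rintro _ ⟨_, ⟨π, hπ, rfl⟩, rfl⟩
    exact ⟨_, mem_image_of_mem _ hπ, rfl⟩
  · refine (isTightMeasureSet_image_of_isCompact (hK.image continuous_snd)).subset ?_
    rintro _ ⟨_, ⟨π, hπ, rfl⟩, rfl⟩
    exact ⟨_, mem_image_of_mem _ hπ, rfl⟩

end Margins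

section CompactDuality

lemma riesz_extension_le {E : Type*} [AddCommGroup E] [Module ℝ E] (C : PointedCone ℝ E)
    (V : Submodule ℝ E) (F : E →ₗ[ℝ] ℝ) (hF : ∀ v ∈ V, v ∈ C → 0 ≤ F v)
    (hV : ∀ y, ∃ v ∈ V, v + y ∈ C) (c : E) (L : ℝ) (hL : ∀ v ∈ V, c - v ∈ C → F v ≤ L) :
    ∃ g : E →ₗ[ℝ] ℝ, (∀ v ∈ V, g v = F v) ∧ (∀ y ∈ C, 0 ≤ g y) ∧ g c ≤ L := by
  -- On `E × ℝ` the two-sided datum becomes a plain extension problem for `(v, t) ↦ F v + t L`.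
  let C' : PointedCone ℝ (E × ℝ) :=
    C.comap (LinearMap.id.coprod (LinearMap.toSpanSingleton ℝ E c)) ⊓
      (PointedCone.positive ℝ ℝ).comap (LinearMap.snd ℝ E ℝ)
  have mem_C' (y : E) (t : ℝ) : (y, t) ∈ C' ↔ y + t • c ∈ C ∧ 0 ≤ t := by simp [C']
  let f : E × ℝ →ₗ.[ℝ] ℝ := ⟨V.prod ⊤, (F.coprod (LinearMap.toSpanSingleton ℝ ℝ L)).domRestrict _⟩
  have f_apply (v : E) (hv : v ∈ V) (t : ℝ) : f ⟨(v, t), hv, trivial⟩ = F v + t * L := by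
    simp [f]
  have f_nonneg : ∀ x : f.domain, (x : E × ℝ) ∈ C' → 0 ≤ f x := by
    rintro ⟨⟨v, t⟩, hv, _⟩ hmem
    obtain ⟨hvt, ht⟩ := (mem_C' v t).1 hmem
    rw [f_apply v hv]
    obtain rfl | ht := ht.eq_or_lt
    · simpa using hF v hv (by simpa using hvt)
    · have hle := hL (-(t⁻¹ • v)) (V.neg_mem (V.smul_mem _ hv)) (by
        convert! C.smul_mem (inv_nonneg.2 ht.le) hvt using 1
        simp [smul_smul, ht.ne', add_comm])
      rw [map_neg, map_smul, smul_eq_mul, neg_le, inv_mul_eq_div, le_div_iff₀ ht] at hle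
      linarith
  have f_dense : ∀ p, ∃ x : f.domain, (x : E × ℝ) + p ∈ C' := by
    rintro ⟨y, t⟩
    obtain ⟨v, hv, hvy⟩ := hV y
    exact ⟨⟨(v, -t), hv, trivial⟩, (mem_C' _ _).2 (by simpa using hvy)⟩
  obtain ⟨g, hgf, hgC⟩ := riesz_extension C' f f_nonneg f_dense
  have g_apply (v : E) (hv : v ∈ V) (t : ℝ) : g (v, t) = F v + t * L :=
    (hgf ⟨(v, t), hv, trivial⟩).trans (f_apply v hv t)
  refine ⟨g ∘ₗ LinearMap.inl ℝ E ℝ, fun v hv => by simpa using g_apply v hv 0, fun y hy =>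
    hgC (y, 0) ((mem_C' _ _).2 (by simpa using hy)), ?_⟩
  have hgc : 0 ≤ g (-c, 1) := hgC _ ((mem_C' _ _).2 (by simp))
  calc g (c, 0) ≤ g (c, 0) + g (-c, 1) := le_add_of_nonneg_right hgc
    _ = g (0, 1) := by rw [← map_add]; simp
    _ = L := by simpa using g_apply 0 V.zero_mem 1

lemma exists_isFiniteMeasure_forall_integral_eq {X : Type*} [TopologicalSpace X] [T2Space X]
    [CompactSpace X] [MeasurableSpace X] [BorelSpace X] (Λ : C(X, ℝ) →ₗ[ℝ] ℝ)
    (hΛ : ∀ f, 0 ≤ f → 0 ≤ Λ f) :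
    ∃ μ : Measure X, IsFiniteMeasure μ ∧ ∀ f : C(X, ℝ), ∫ x, f x ∂μ = Λ f := by
  let Λc : CompactlySupportedContinuousMap X ℝ →ₚ[ℝ] ℝ := PositiveLinearMap.mk₀
    { toFun := fun f => Λ f
      map_add' := fun f g => Λ.map_add f g
      map_smul' := fun a f => Λ.map_smul a f } fun f hf => hΛ f hf
  exact ⟨RealRMK.rieszMeasure Λc, inferInstance, fun f =>
    RealRMK.integral_rieszMeasure Λc (CompactlySupportedContinuousMap.continuousMapEquiv f)⟩

/-- Integration of continuous functions on a compact space, as a linear functional. -/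
def integralLinearMap {Z : Type*} [TopologicalSpace Z] [CompactSpace Z] [MeasurableSpace Z]
    [OpensMeasurableSpace Z] (μ : Measure Z) [IsFiniteMeasure μ] : C(Z, ℝ) →ₗ[ℝ] ℝ where
  toFun f := ∫ z, f z ∂μ
  map_add' f g := integral_add (f.continuous.integrable_of_hasCompactSupport (.of_compactSpace f))
    (g.continuous.integrable_of_hasCompactSupport (.of_compactSpace g))
  map_smul' a f := integral_smul a f

variable {X Y : Type*} [TopologicalSpace X] [CompactSpace X] [T2Space X]
  [SecondCountableTopology X] [MeasurableSpace X] [BorelSpace X] [TopologicalSpace Y]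
  [CompactSpace Y] [T2Space Y] [SecondCountableTopology Y] [MeasurableSpace Y] [BorelSpace Y]

theorem exists_coupling_integral_le (μ : Measure X) (ν : Measure Y) [IsProbabilityMeasure μ]
    [IsProbabilityMeasure ν] (c : C(X × Y, ℝ)) (L : ℝ)
    (hL : ∀ (φ : C(X, ℝ)) (ψ : C(Y, ℝ)), (∀ x y, φ x + ψ y ≤ c (x, y)) →
      ∫ x, φ x ∂μ + ∫ y, ψ y ∂ν ≤ L) :
    ∃ π : Measure (X × Y), π.map Prod.fst = μ ∧ π.map Prod.snd = ν ∧ ∫ p, c p ∂π ≤ L := by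
  let V : Submodule ℝ C(X × Y, ℝ) :=
    (ContinuousMap.compRightAlgHom ℝ ℝ ContinuousMap.fst).toLinearMap.range ⊔
      (ContinuousMap.compRightAlgHom ℝ ℝ ContinuousMap.snd).toLinearMap.range
  have mem_V (h : C(X × Y, ℝ)) : h ∈ V ↔ ∃ (φ : C(X, ℝ)) (ψ : C(Y, ℝ)),
      φ.comp ContinuousMap.fst + ψ.comp ContinuousMap.snd = h := by
    simp only [V, Submodule.mem_sup, LinearMap.mem_range, exists_exists_eq_and]
    rfl
  have hsplit (φ : C(X, ℝ)) (ψ : C(Y, ℝ)) :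
      integralLinearMap (μ.prod ν) (φ.comp ContinuousMap.fst + ψ.comp ContinuousMap.snd) =
        ∫ x, φ x ∂μ + ∫ y, ψ y ∂ν := by
    rw [map_add]
    exact congrArg₂ (· + ·) ((integral_fun_fst (μ := μ) (ν := ν) φ).trans (by simp))
      ((integral_fun_snd (μ := μ) (ν := ν) ψ).trans (by simp))
  obtain ⟨g, hgV, hg0, hgc⟩ := riesz_extension_le (PointedCone.positive ℝ _) V
    (integralLinearMap (μ.prod ν)) (fun v _ hv => integral_nonneg hv)
    (fun y => ⟨algebraMap ℝ _ ‖y‖, (mem_V _).2 ⟨algebraMap ℝ _ ‖y‖, 0, by ext; simp⟩, fun p =>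
      neg_le_iff_add_nonneg'.1 (neg_le_of_abs_le (y.norm_coe_le_norm p))⟩) c L fun v hv hcv => by
        obtain ⟨φ, ψ, rfl⟩ := (mem_V v).1 hv
        exact (hsplit φ ψ).trans_le (hL φ ψ fun x y => sub_nonneg.1 (hcv (x, y)))
  obtain ⟨π, _, hπ⟩ := exists_isFiniteMeasure_forall_integral_eq g hg0
  have hπsplit (φ : C(X, ℝ)) (ψ : C(Y, ℝ)) :
      ∫ p, φ p.1 + ψ p.2 ∂π = ∫ x, φ x ∂μ + ∫ y, ψ y ∂ν :=
    (hπ (φ.comp .fst + ψ.comp .snd)).trans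
      ((hgV _ ((mem_V _).2 ⟨φ, ψ, rfl⟩)).trans (hsplit φ ψ))
  refine ⟨π, ?_, ?_, (hπ c).trans_le hgc⟩
  · refine ext_of_forall_integral_eq_of_IsFiniteMeasure fun φ => ?_
    rw [integral_map measurable_fst.aemeasurable φ.continuous.aestronglyMeasurable]
    simpa using hπsplit φ.toContinuousMap 0
  · refine ext_of_forall_integral_eq_of_IsFiniteMeasure fun ψ => ?_
    rw [integral_map measurable_snd.aemeasurable ψ.continuous.aestronglyMeasurable]
    simpa using hπsplit 0 ψ.toContinuousMap

end CompactDuality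

section CompactMetric

lemma exists_lipschitzWith_between {X : Type*} [PseudoMetricSpace X] {φ ψ : X → ℝ}
    (h : ∀ x y, φ x - ψ y ≤ dist x y) :
    ∃ f : X → ℝ, LipschitzWith 1 f ∧ φ ≤ f ∧ f ≤ ψ := by
  have hle (x y : X) : φ x ≤ ψ y + dist x y := sub_le_iff_le_add'.1 (h x y)
  have hbdd (x : X) : BddBelow (range fun y => ψ y + dist x y) := ⟨φ x, forall_mem_range.2 (hle x)⟩
  refine ⟨fun x => ⨅ y, ψ y + dist x y, .of_le_add fun x x' => ?_,
    fun x => have : Nonempty X := ⟨x⟩; le_ciInf (hle x),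
    fun x => (ciInf_le (hbdd x) x).trans (by simp)⟩
  have : Nonempty X := ⟨x⟩
  rw [← sub_le_iff_le_add]
  refine le_ciInf fun y => sub_le_iff_le_add.2 ((ciInf_le (hbdd x) y).trans ?_)
  linarith [dist_triangle x x' y]

lemma mem_couplings_of_map {S : Type*} [MeasurableSpace S] {μ ν : Measure S}
    [IsProbabilityMeasure μ] {π : Measure (S × S)} (h₁ : π.map Prod.fst = μ)
    (h₂ : π.map Prod.snd = ν) : π ∈ Couplings μ ν := by
  subst h₁
  exact ⟨Measure.isProbabilityMeasure_of_map Prod.fst, rfl, h₂⟩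

lemma ofReal_abs_integral_sub_le_lipDist {S : Type*} [TopologicalSpace S] [MeasurableSpace S]
    {c : S → S → ℝ} {u : S → ℝ} (hu : u ∈ LipC c) (μ ν : Measure S) :
    ENNReal.ofReal |∫ x, u x ∂μ - ∫ x, u x ∂ν| ≤ lipDist c μ ν :=
  le_iSup₂ (f := fun (u : S → ℝ) (_ : u ∈ LipC c) =>
    ENNReal.ofReal |∫ x, u x ∂μ - ∫ x, u x ∂ν|) u hu

lemma mem_LipC_dist_of_lipschitzWith {T : Type*} [PseudoMetricSpace T] [CompactSpace T] {f : T → ℝ}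
    (hf : LipschitzWith 1 f) : f ∈ LipC (dist : T → T → ℝ) := by
  refine ⟨hf.continuous, ?_, fun x y => by simpa [Real.dist_eq] using hf.dist_le_mul x y⟩
  obtain ⟨M, hM⟩ := isCompact_univ.exists_bound_of_continuousOn hf.continuous.continuousOn
  exact ⟨M, fun x => hM x (mem_univ x)⟩

lemma integral_add_integral_le_lipDist {T : Type*} [PseudoMetricSpace T] [CompactSpace T]
    [MeasurableSpace T] [OpensMeasurableSpace T] {μ ν : Measure T} [IsFiniteMeasure μ]
    [IsFiniteMeasure ν] (htop : lipDist dist μ ν ≠ ⊤) (φ ψ : C(T, ℝ))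
    (h : ∀ x y, φ x + ψ y ≤ dist x y) :
    ∫ x, φ x ∂μ + ∫ x, ψ x ∂ν ≤ (lipDist dist μ ν).toReal := by
  obtain ⟨f, hf, hφf, hfψ⟩ := exists_lipschitzWith_between (φ := φ) (ψ := -ψ) fun x y => by
    simpa using h x y
  have hint {ρ : Measure T} [IsFiniteMeasure ρ] {g : T → ℝ} (hg : Continuous g) :
      Integrable g ρ :=
    hg.integrable_of_hasCompactSupport (.of_compactSpace g)
  calc ∫ x, φ x ∂μ + ∫ x, ψ x ∂ν ≤ ∫ x, f x ∂μ - ∫ x, f x ∂ν := by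
        rw [sub_eq_add_neg, ← integral_neg]
        exact add_le_add (integral_mono (hint φ.continuous) (hint hf.continuous) hφf)
          (integral_mono (hint ψ.continuous) (hint hf.continuous).neg fun x => le_neg.1 (hfψ x))
    _ ≤ |∫ x, f x ∂μ - ∫ x, f x ∂ν| := le_abs_self _
    _ ≤ (lipDist dist μ ν).toReal := (ENNReal.ofReal_le_iff_le_toReal htop).1
        (ofReal_abs_integral_sub_le_lipDist (mem_LipC_dist_of_lipschitzWith hf) μ ν)

theorem exists_mem_couplings_lintegral_dist_le {T : Type*} [MetricSpace T] [CompactSpace T]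
    [MeasurableSpace T] [BorelSpace T] (μ ν : Measure T) [IsProbabilityMeasure μ]
    [IsProbabilityMeasure ν] :
    ∃ π ∈ Couplings μ ν, ∫⁻ p, ENNReal.ofReal (dist p.1 p.2) ∂π ≤ lipDist dist μ ν := by
  by_cases htop : lipDist dist μ ν = ⊤
  · exact ⟨μ.prod ν, mem_couplings_of_map (by simp) (by simp), htop ▸ le_top⟩
  obtain ⟨π, hπμ, hπν, hπ⟩ := exists_coupling_integral_le μ ν
    ⟨fun p => dist p.1 p.2, continuous_dist⟩ _ (integral_add_integral_le_lipDist htop)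
  have hmem := mem_couplings_of_map hπμ hπν
  have := hmem.1
  refine ⟨π, hmem, ?_⟩
  rw [← ofReal_integral_eq_lintegral_ofReal
    (continuous_dist.integrable_of_hasCompactSupport (.of_compactSpace _))
    (ae_of_all _ fun _ => dist_nonneg)]
  exact ENNReal.ofReal_le_of_le_toReal hπ

end CompactMetric

section Lifting

lemma exists_map_fst_eq_map_prodMap_id_eq {X X' Z : Type*} [MeasurableSpace X] [MeasurableSpace X']
    [MeasurableSpace Z] [StandardBorelSpace Z] [Nonempty Z] {U : X → X'} (hU : Measurable U)
    (μ : Measure X) [SFinite μ] (γ : Measure (X' × Z)) [IsFiniteMeasure γ]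
    (h : γ.map Prod.fst = μ.map U) :
    ∃ π : Measure (X × Z), π.map Prod.fst = μ ∧ π.map (Prod.map U id) = γ := by
  refine ⟨μ ⊗ₘ γ.condKernel.comap U hU, Measure.fst_compProd _ _, ?_⟩
  calc (μ ⊗ₘ γ.condKernel.comap U hU).map (Prod.map U id) = μ.map U ⊗ₘ γ.condKernel := by
        ext s hs
        rw [Measure.map_apply (hU.prodMap measurable_id) hs,
          Measure.compProd_apply (hU.prodMap measurable_id hs), Measure.compProd_apply hs,
          lintegral_map (Kernel.measurable_kernel_prodMk_left hs) hU]
        rfl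
    _ = γ := by rw [← h]; exact γ.disintegrate γ.condKernel

lemma exists_map_snd_eq_map_prodMap_id_eq {Y Y' Z : Type*} [MeasurableSpace Y] [MeasurableSpace Y']
    [MeasurableSpace Z] [StandardBorelSpace Z] [Nonempty Z] {V : Y → Y'} (hV : Measurable V)
    (ν : Measure Y) [SFinite ν] (γ : Measure (Z × Y')) [IsFiniteMeasure γ]
    (h : γ.map Prod.snd = ν.map V) :
    ∃ π : Measure (Z × Y), π.map Prod.snd = ν ∧ π.map (Prod.map id V) = γ := by
  have hswap : (γ.map Prod.swap).map Prod.fst = ν.map V := by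
    rwa [Measure.map_map measurable_fst measurable_swap]
  obtain ⟨π, hπν, hπγ⟩ := exists_map_fst_eq_map_prodMap_id_eq hV ν (γ.map Prod.swap) hswap
  refine ⟨π.map Prod.swap, by rwa [Measure.map_map measurable_snd measurable_swap], ?_⟩
  calc (π.map Prod.swap).map (Prod.map id V) = (π.map (Prod.map V id)).map Prod.swap := by
        rw [Measure.map_map (by fun_prop) (by fun_prop),
          Measure.map_map (by fun_prop) (by fun_prop)]
        rfl
    _ = γ := by simp [hπγ, Measure.map_map measurable_swap measurable_swap]

lemma exists_coupling_map_prodMap_eq {X X' Y Y' : Type*} [MeasurableSpace X] [MeasurableSpace X']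
    [MeasurableSpace Y] [MeasurableSpace Y'] [StandardBorelSpace X] [Nonempty X]
    [StandardBorelSpace Y'] [Nonempty Y'] {U : X → X'} {V : Y → Y'} (hU : Measurable U)
    (hV : Measurable V) (μ : Measure X) (ν : Measure Y) [IsFiniteMeasure μ] [SFinite ν]
    (γ : Measure (X' × Y')) [IsFiniteMeasure γ] (hμ : γ.map Prod.fst = μ.map U)
    (hν : γ.map Prod.snd = ν.map V) :
    ∃ π : Measure (X × Y), π.map Prod.fst = μ ∧ π.map Prod.snd = ν ∧ π.map (Prod.map U V) = γ := by
  obtain ⟨ρ, rfl, rfl⟩ := exists_map_fst_eq_map_prodMap_id_eq hU μ γ hμ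
  have : IsFiniteMeasure ρ := Measure.isFiniteMeasure_of_map measurable_fst.aemeasurable
  rw [Measure.map_map (by fun_prop) (by fun_prop)] at hν
  obtain ⟨π, hπν, rfl⟩ := exists_map_snd_eq_map_prodMap_id_eq hV ν ρ hν
  refine ⟨π, ?_, hπν, ?_⟩ <;> rw [Measure.map_map (by fun_prop) (by fun_prop)] <;> rfl

theorem exists_mem_couplings_lintegral_dist_comp_le {S T : Type*} [MeasurableSpace S]
    [TopologicalSpace S] [PolishSpace S] [BorelSpace S] [MetricSpace T] [CompactSpace T]
    {U : S → T} (hU : Continuous U) (μ ν : Measure S) [IsProbabilityMeasure μ]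
    [IsProbabilityMeasure ν] :
    ∃ π ∈ Couplings μ ν, ∫⁻ p, ENNReal.ofReal (dist (U p.1) (U p.2)) ∂π ≤
      lipDist (fun x y => dist (U x) (U y)) μ ν := by
  borelize T
  have := nonempty_of_isProbabilityMeasure μ
  have : Nonempty T := ‹Nonempty S›.map U
  have := Measure.isProbabilityMeasure_map (μ := μ) hU.aemeasurable
  have := Measure.isProbabilityMeasure_map (μ := ν) hU.aemeasurable
  obtain ⟨γ, ⟨_, hγμ, hγν⟩, hγ⟩ := exists_mem_couplings_lintegral_dist_le (μ.map U) (ν.map U)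
  obtain ⟨π, hπμ, hπν, rfl⟩ :=
    exists_coupling_map_prodMap_eq hU.measurable hU.measurable μ ν γ hγμ hγν
  refine ⟨π, mem_couplings_of_map hπμ hπν, ?_⟩
  rw [lintegral_map (by fun_prop) (by fun_prop)] at hγ
  refine hγ.trans (iSup₂_le fun f hf => ?_)
  rw [integral_map hU.aemeasurable hf.1.aestronglyMeasurable,
    integral_map hU.aemeasurable hf.1.aestronglyMeasurable]
  exact ofReal_abs_integral_sub_le_lipDist (u := f ∘ U)
    ⟨hf.1.comp hU, hf.2.1.imp fun M hM x => hM (U x), fun x y => hf.2.2 (U x) (U y)⟩ μ ν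

end Lifting

section Cost

lemma StarCond.nonneg {S : Type*} [TopologicalSpace S] {c : S → S → ℝ} (hc : StarCond c)
    (x y : S) : 0 ≤ c x y := by
  rw [hc x y]
  refine Real.sSup_nonneg ?_
  rintro _ ⟨u, -, rfl⟩
  exact abs_nonneg _

lemma zero_mem_LipC {S : Type*} [TopologicalSpace S] {c : S → S → ℝ} (hc : ∀ x y, 0 ≤ c x y) :
    0 ∈ LipC c :=
  ⟨continuous_const, ⟨0, by simp⟩, by simpa using hc⟩

lemma StarCond.isLUB {S : Type*} [TopologicalSpace S] {c : S → S → ℝ} (hc : StarCond c)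
    (x y : S) : IsLUB ((fun u : S → ℝ => |u x - u y|) '' LipC c) (c x y) := by
  have himage : (fun u : S → ℝ => |u x - u y|) '' LipC c =
      {r : ℝ | ∃ u ∈ LipC c, r = |u x - u y|} := by
    simp only [image, eq_comm]
  rw [hc x y, ← himage]
  exact isLUB_csSup ⟨_, mem_image_of_mem _ (zero_mem_LipC hc.nonneg)⟩
    ⟨c x y, forall_mem_image.2 fun u hu => hu.2.2 x y⟩

lemma StarCond.exists_seq_isLUB {S : Type*} [TopologicalSpace S] [SecondCountableTopology S]
    {c : S → S → ℝ} (hc : StarCond c) :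
    ∃ u : ℕ → S → ℝ, (∀ k, u k ∈ LipC c) ∧
      ∀ x y, IsLUB (range fun k => |u k x - u k y|) (c x y) := by
  let osc (u : S → ℝ) (p : S × S) : ℝ := |u p.1 - u p.2|
  have hosc : ∀ f ∈ osc '' LipC c, LowerSemicontinuous f := forall_mem_image.2 fun u hu =>
    have := hu.1
    Continuous.lowerSemicontinuous (by fun_prop)
  obtain ⟨F, hF, hFcount, hFlub⟩ := exists_countable_lowerSemicontinuous_isLUB hosc
    (isLUB_pi.2 fun p => by simpa only [image_image] using! hc.isLUB p.1 p.2)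
  have h0 : osc 0 ∈ osc '' LipC c := mem_image_of_mem _ (zero_mem_LipC hc.nonneg)
  obtain ⟨e, he⟩ := (hFcount.insert (osc 0)).exists_eq_range (insert_nonempty _ _)
  have hmem (k : ℕ) : e k ∈ osc '' LipC c := insert_subset h0 hF (he ▸ mem_range_self k)
  choose u hu hue using hmem
  refine ⟨u, hu, fun x y => ?_⟩
  have hlub := isLUB_pi.1 (hFlub.insert (osc 0)) (x, y)
  rw [he, ← funext hue, ← range_comp] at hlub
  simpa [osc, hc.nonneg x y, Function.comp_def] using hlub

/-- The map `x ↦ (u 0 x, …, u (n - 1) x)` given by the first `n` functions of a sequence. Pulling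
back the sup distance along it turns `max_{k < n} |u k x - u k y|` into a pseudometric coming from
a finite-dimensional space. -/
def initialMap {S : Type*} (u : ℕ → S → ℝ) (n : ℕ) (x : S) : Fin n → ℝ := fun k => u k x

lemma continuous_initialMap {S : Type*} [TopologicalSpace S] {u : ℕ → S → ℝ}
    (hu : ∀ k, Continuous (u k)) (n : ℕ) : Continuous (initialMap u n) :=
  continuous_pi fun k => hu k

lemma monotone_dist_initialMap {S : Type*} (u : ℕ → S → ℝ) (x y : S) :
    Monotone fun n => dist (initialMap u n x) (initialMap u n y) := fun _ n hmn =>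
  (dist_pi_le_iff dist_nonneg).2 fun k =>
    dist_le_pi_dist (initialMap u n x) (initialMap u n y) (k.castLE hmn)

lemma isLUB_dist_initialMap {S : Type*} {u : ℕ → S → ℝ} {x y : S} {r : ℝ}
    (h : IsLUB (range fun k => |u k x - u k y|) r) :
    IsLUB (range fun n => dist (initialMap u n x) (initialMap u n y)) r := by
  refine ⟨forall_mem_range.2 fun n => ?_, fun b hb => h.2 (forall_mem_range.2 fun k => ?_)⟩
  · have hr : 0 ≤ r := (abs_nonneg _).trans (h.1 (mem_range_self 0))
    exact (dist_pi_le_iff hr).2 fun k => h.1 (mem_range_self (k : ℕ))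
  · exact (dist_le_pi_dist (initialMap u (k + 1) x) (initialMap u (k + 1) y) (Fin.last k)).trans
      (hb (mem_range_self (k + 1)))

lemma lintegral_cost_eq_iSup {S : Type*} [TopologicalSpace S] [MeasurableSpace S]
    [OpensMeasurableSpace S] {c : S → S → ℝ} {u : ℕ → S → ℝ}
    (hu : ∀ k, Continuous (u k)) (hc : ∀ x y, IsLUB (range fun k => |u k x - u k y|) (c x y))
    (π : Measure (S × S)) :
    ∫⁻ p, ENNReal.ofReal (c p.1 p.2) ∂π =
      ⨆ n, ∫⁻ p, ENNReal.ofReal (dist (initialMap u n p.1) (initialMap u n p.2)) ∂π := by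
  have hmono (p : S × S) :
      Monotone fun n => ENNReal.ofReal (dist (initialMap u n p.1) (initialMap u n p.2)) :=
    ENNReal.ofReal_mono.comp (monotone_dist_initialMap u p.1 p.2)
  have hsup (p : S × S) : ENNReal.ofReal (c p.1 p.2) =
      ⨆ n, ENNReal.ofReal (dist (initialMap u n p.1) (initialMap u n p.2)) :=
    (iSup_eq_of_tendsto (hmono p) (ENNReal.tendsto_ofReal (tendsto_atTop_isLUB
      (monotone_dist_initialMap u p.1 p.2) (isLUB_dist_initialMap (hc p.1 p.2))))).symm
  have hcont (n : ℕ) : Continuous (initialMap u n) := continuous_initialMap hu n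
  simp_rw [hsup]
  exact lintegral_iSup (fun n => by fun_prop) fun _ _ hmn p => hmono p hmn

end Cost

section Duality

lemma exists_forall_le_of_monotone {X α : Type*} [TopologicalSpace X] [LinearOrder α]
    {K : Set X} (hK : IsCompact K) {I : ℕ → X → α} (hI : ∀ n, LowerSemicontinuous (I n))
    (hmono : Monotone I) {a : α} (h : ∀ n, ∃ x ∈ K, I n x ≤ a) : ∃ x ∈ K, ∀ n, I n x ≤ a := by
  obtain ⟨x, hxK, hx⟩ := hK.inter_iInter_nonempty (fun n => {x | I n x ≤ a})
    (fun n => (hI n).isClosed_preimage a) fun s => by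
      obtain ⟨x, hxK, hx⟩ := h (s.sup id)
      exact ⟨x, hxK, mem_iInter₂.2 fun n hn => (hmono (Finset.le_sup (f := id) hn) x).trans hx⟩
  exact ⟨x, hxK, fun n => mem_iInter.1 hx n⟩

lemma lipDist_mono {S : Type*} [TopologicalSpace S] [MeasurableSpace S] {c c' : S → S → ℝ}
    (h : ∀ x y, c x y ≤ c' x y) (μ ν : Measure S) : lipDist c μ ν ≤ lipDist c' μ ν :=
  iSup₂_le fun _ hu =>
    ofReal_abs_integral_sub_le_lipDist ⟨hu.1, hu.2.1, fun x y => (hu.2.2 x y).trans (h x y)⟩ μ ν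

lemma lipDist_le_KR {S : Type*} [TopologicalSpace S] [SecondCountableTopology S]
    [MeasurableSpace S] [OpensMeasurableSpace S] (c : S → S → ℝ) (μ ν : Measure S) :
    lipDist c μ ν ≤ KR c μ ν := by
  refine iSup₂_le fun u hu => le_iInf₂ fun π hπ => ?_
  obtain ⟨_, rfl, rfl⟩ := hπ
  obtain ⟨hucont, ⟨M, hM⟩, huc⟩ := hu
  have hint₁ : Integrable (fun p : S × S => u p.1) π :=
    .of_bound (hucont.comp continuous_fst).aestronglyMeasurable M
      (ae_of_all _ fun p => hM p.1)
  have hint₂ : Integrable (fun p : S × S => u p.2) π :=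
    .of_bound (hucont.comp continuous_snd).aestronglyMeasurable M
      (ae_of_all _ fun p => hM p.2)
  rw [integral_map measurable_fst.aemeasurable hucont.aestronglyMeasurable,
    integral_map measurable_snd.aemeasurable hucont.aestronglyMeasurable,
    ← integral_sub hint₁ hint₂, ← Real.enorm_eq_ofReal_abs]
  refine (enorm_integral_le_lintegral_enorm _).trans (lintegral_mono fun p => ?_)
  rw [Real.enorm_eq_ofReal_abs]
  exact ENNReal.ofReal_le_ofReal (huc p.1 p.2)

lemma coe_mem_couplings_iff {S : Type*} [MeasurableSpace S] {π : ProbabilityMeasure (S × S)}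
    {μ ν : ProbabilityMeasure S} :
    (π : Measure (S × S)) ∈ Couplings (μ : Measure S) ν ↔ margins π = (μ, ν) :=
  ⟨fun h => margins_eq_iff.2 h.2, fun h => ⟨inferInstance, margins_eq_iff.1 h⟩⟩

variable {S : Type*} [TopologicalSpace S] [PolishSpace S] [MeasurableSpace S] [BorelSpace S]
  {c : S → S → ℝ}

lemma exists_mem_couplings_lintegral_dist_initialMap_le {u : ℕ → S → ℝ} (hu : ∀ k, u k ∈ LipC c)
    (hc0 : ∀ x y, 0 ≤ c x y) (n : ℕ) (μ ν : Measure S) [IsProbabilityMeasure μ]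
    [IsProbabilityMeasure ν] :
    ∃ π ∈ Couplings μ ν,
      ∫⁻ p, ENNReal.ofReal (dist (initialMap u n p.1) (initialMap u n p.2)) ∂π ≤
        lipDist c μ ν := by
  choose M hM using fun k => (hu k).2.1
  let box : Set (Fin n → ℝ) := Set.pi univ fun k => Icc (-M k) (M k)
  have : CompactSpace box := isCompact_iff_compactSpace.1 (isCompact_univ_pi fun _ => isCompact_Icc)
  have hbox (x : S) : initialMap u n x ∈ box := fun k _ => abs_le.1 (hM k x)
  obtain ⟨π, hπ, hle⟩ := exists_mem_couplings_lintegral_dist_comp_le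
    ((continuous_initialMap (fun k => (hu k).1) n).codRestrict hbox) μ ν
  refine ⟨π, hπ, hle.trans (lipDist_mono (fun x y => ?_) μ ν)⟩
  exact (dist_pi_le_iff (hc0 x y)).2 fun k => (hu k).2.2 x y

lemma StarCond.lowerSemicontinuous_lintegral (hc : StarCond c) :
    LowerSemicontinuous fun π : ProbabilityMeasure (S × S) =>
      ∫⁻ p, ENNReal.ofReal (c p.1 p.2) ∂(π : Measure (S × S)) := by
  obtain ⟨u, hu, hlub⟩ := hc.exists_seq_isLUB
  have hcont (n : ℕ) : Continuous (initialMap u n) := continuous_initialMap (fun k => (hu k).1) n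
  simp_rw [lintegral_cost_eq_iSup (fun k => (hu k).1) hlub]
  exact lowerSemicontinuous_iSup fun n =>
    lowerSemicontinuous_lintegral_ofReal (by fun_prop) fun _ => dist_nonneg

theorem StarCond.exists_mem_couplings_lintegral_le (hc : StarCond c) (μ ν : ProbabilityMeasure S) :
    ∃ π ∈ Couplings (μ : Measure S) (ν : Measure S), ∫⁻ p, ENNReal.ofReal (c p.1 p.2) ∂π ≤
      lipDist c μ ν := by
  obtain ⟨u, hu, hlub⟩ := hc.exists_seq_isLUB
  have hcont (n : ℕ) : Continuous (initialMap u n) := continuous_initialMap (fun k => (hu k).1) n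
  have hK : IsCompact (margins ⁻¹' {(μ, ν)}) :=
    isProperMap_margins.isCompact_preimage isCompact_singleton
  obtain ⟨π, hπ, hle⟩ := exists_forall_le_of_monotone hK (a := lipDist c μ ν)
    (I := fun n (π : ProbabilityMeasure (S × S)) =>
      ∫⁻ p, ENNReal.ofReal (dist (initialMap u n p.1) (initialMap u n p.2)) ∂(π : Measure (S × S)))
    (fun n => lowerSemicontinuous_lintegral_ofReal (by fun_prop) fun _ => dist_nonneg)
    (fun _ _ hmn π => lintegral_mono fun p =>
      ENNReal.ofReal_le_ofReal (monotone_dist_initialMap u p.1 p.2 hmn))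
    fun n => by
      obtain ⟨π, hπ, hle⟩ := exists_mem_couplings_lintegral_dist_initialMap_le hu hc.nonneg n
        (μ : Measure S) (ν : Measure S)
      exact ⟨⟨π, hπ.1⟩, coe_mem_couplings_iff.1 hπ, hle⟩
  refine ⟨π, coe_mem_couplings_iff.2 hπ, ?_⟩
  rw [lintegral_cost_eq_iSup (fun k => (hu k).1) hlub]
  exact iSup_le hle

theorem StarCond.KR_eq_lipDist (hc : StarCond c) (μ ν : ProbabilityMeasure S) :
    KR c (μ : Measure S) (ν : Measure S) = lipDist c μ ν :=
  let ⟨π, hπ, hle⟩ := hc.exists_mem_couplings_lintegral_le μ ν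
  le_antisymm ((iInf₂_le π hπ).trans hle) (lipDist_le_KR c μ ν)

end Duality

section Selection

lemma KR_eq_lintegral_of_mem_minimizersOn {S : Type*} [MeasurableSpace S] {c : S → S → ℝ}
    {μ ν : ProbabilityMeasure S} {π : ProbabilityMeasure (S × S)}
    (hπ : π ∈ minimizersOn (fun π : ProbabilityMeasure (S × S) =>
      ∫⁻ p, ENNReal.ofReal (c p.1 p.2) ∂(π : Measure (S × S))) (margins ⁻¹' {(μ, ν)})) :
    KR c (μ : Measure S) (ν : Measure S) =
      ∫⁻ p, ENNReal.ofReal (c p.1 p.2) ∂(π : Measure (S × S)) :=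
  le_antisymm (iInf₂_le (π : Measure (S × S)) (coe_mem_couplings_iff.2 hπ.1))
    (le_iInf₂ fun ρ hρ => isMinOn_iff.1 hπ.2 ⟨ρ, hρ.1⟩ (coe_mem_couplings_iff.1 hρ))

lemma le_univCompletion {α : Type*} (m : MeasurableSpace α) : m ≤ univCompletion m :=
  le_iInf₂ fun _ _ _ hs => MeasurableSet.nullMeasurableSet hs

theorem parametrized_KR_selection_general {S : Type*} [TopologicalSpace S] [PolishSpace S]
    [MeasurableSpace S] [BorelSpace S] {Ω : Type*} [MeasurableSpace Ω] {c : S → S → ℝ}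
    (hc : StarCond c) {μ ν : Ω → ProbabilityMeasure S} (hμ : Measurable μ) (hν : Measurable ν) :
    (∀ ω, KR c (μ ω : Measure S) (ν ω : Measure S) = lipDist c (μ ω) (ν ω)) ∧
      ∃ lam : Ω → ProbabilityMeasure (S × S), Measurable lam ∧
        ∀ ω, (lam ω : Measure (S × S)).map Prod.fst = μ ω ∧
          (lam ω : Measure (S × S)).map Prod.snd = ν ω ∧
          KR c (μ ω : Measure S) (ν ω : Measure S) =
            ∫⁻ p, ENNReal.ofReal (c p.1 p.2) ∂(lam ω : Measure (S × S)) := by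
  obtain ⟨lam, hlam, hmin⟩ := exists_measurable_minimizer_fiber isProperMap_margins
    hc.lowerSemicontinuous_lintegral (hμ.prodMk hν) fun ω => margins_surjective (μ ω, ν ω)
  refine ⟨fun ω => hc.KR_eq_lipDist (μ ω) (ν ω), lam, hlam, fun ω => ?_⟩
  have hmargins := margins_eq_iff.1 (hmin ω).1
  exact ⟨hmargins.1, hmargins.2, KR_eq_lintegral_of_mem_minimizersOn (hmin ω)⟩

end Selection

/-- **Point 1 of the parametrized Kantorovich–Rubinštein theorem**: for measurable families
of probability measures `ω ↦ μ_ω`, `ω ↦ ν_ω` (with a joint integrability condition on the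
cost), `KR_c(μ_ω,ν_ω) = ℓ_c(μ_ω,ν_ω)` for every `ω`, and there is a map `ω ↦ λ_ω`,
measurable for the universal completion of `𝒜`, with `λ_ω ∈ D(μ_ω,ν_ω)` an optimal
coupling realizing this value. -/
theorem parametrized_KR_selection
    {S : Type*} [TopologicalSpace S] [PolishSpace S] [MeasurableSpace S] [BorelSpace S]
    {Ω : Type*} [mΩ : MeasurableSpace Ω] (P : Measure Ω) [IsProbabilityMeasure P]
    (c : S → S → ℝ) (hc0 : ∀ x y, 0 ≤ c x y) (hstar : StarCond c)
    (μ ν : Ω → ProbabilityMeasure S)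
    (hμ : @Measurable Ω (ProbabilityMeasure S) mΩ (borel (ProbabilityMeasure S)) μ)
    (hν : @Measurable Ω (ProbabilityMeasure S) mΩ (borel (ProbabilityMeasure S)) ν)
    (x₀ : S)
    (hμint : ∫⁻ ω, ∫⁻ x, ENNReal.ofReal (c x x₀) ∂(μ ω : Measure S) ∂P < ⊤)
    (hνint : ∫⁻ ω, ∫⁻ x, ENNReal.ofReal (c x x₀) ∂(ν ω : Measure S) ∂P < ⊤) :
    (∀ ω, KR c (μ ω : Measure S) (ν ω : Measure S)
        = lipDist c (μ ω : Measure S) (ν ω : Measure S)) ∧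
    ∃ lam : Ω → ProbabilityMeasure (S × S),
      (@Measurable Ω (ProbabilityMeasure (S × S)) (univCompletion mΩ)
        (borel (ProbabilityMeasure (S × S))) lam) ∧
      ∀ ω, (lam ω : Measure (S × S)).map Prod.fst = (μ ω : Measure S) ∧
        (lam ω : Measure (S × S)).map Prod.snd = (ν ω : Measure S) ∧
        KR c (μ ω : Measure S) (ν ω : Measure S)
          = ∫⁻ p, ENNReal.ofReal (c p.1 p.2) ∂(lam ω : Measure (S × S)) := by
  rw [← BorelSpace.measurable_eq] at *
  obtain ⟨hKR, lam, hlam, hopt⟩ := parametrized_KR_selection_general hstar hμ hν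
  exact ⟨hKR, lam, hlam.mono (le_univCompletion mΩ) le_rfl, hopt⟩

end
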